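/- Let A and B be completely distributive separated cocomplete V-categories, with left adjoints t_A ⊣ sup_A and t_B ⊣ sup_B. For a presheaf θ on A ⊗ B define q(θ)(a,b) := ⨅_{x,y} [t_A(a)(x) ⊗ t_B(b)(y), θ(x,y)]. Then: (i) q(θ) is a G-ideal on A ⊗ B; (ii) θ ≤ q(θ) pointwise; (iii) for every G-ideal ξ, q(θ) ≤ ξ pointwise if and only if θ ≤ ξ pointwise. Hence q(θ) is the least G-ideal above θ, and q is the left adjoint of the inclusion A ⊗_V B ↪ D(A ⊗ B). -/

import Mathlib

/-!
By complete distributivity, `t_A` satisfies, for all `a` and presheaves `φ`: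

* `sup (t a) = a` and `t a ≤ A(·, a)`, from `t ⊣ sup ⊣ y` together with `sup ∘ y = id`;
* `t (sup φ) ≤ φ`, the counit of `t ⊣ sup`;
* `t a x * A(a, a') ≤ t a' x`, functoriality of `t`;
* `t a x ≤ ⨆ z, t a z * t z x` (`SupCat.interpolation`): the right-hand side is a presheaf
  with supremum at least `a`, because each `t z` has supremum `z` and `t a` has supremum `a`.

Functoriality makes `q θ` a presheaf and, with `φ a ≤ A(a, sup φ)`, gives one half of the G-ideal
equation; interpolation and the counit give the other half. The bound `t a ≤ A(·, a)` gives
`θ ≤ q θ`. Finally a G-ideal `ξ` is fixed by `q`, as its defining equation at `(t a, t b)` reads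
`q ξ (a, b) = ξ (sup (t a), sup (t b)) = ξ (a, b)`; as `q` is monotone, `θ ≤ ξ` implies `q θ ≤ ξ`.
-/

/- `V` is a commutative quantale: a complete lattice with a commutative monoid
structure `(*, 1)` distributing over arbitrary suprema. -/
variable {V : Type*} [CommMonoid V] [CompleteLattice V] [IsQuantale V]

/-- The internal hom `[v,w]` of the commutative quantale `V`. -/
def qhom (v w : V) : V := sSup {u | u * v ≤ w}

/-- A separated cocomplete `V`-category: a `V`-category whose underlying order is
antisymmetric, equipped with `sup : DA → A` satisfying
`A(sup φ, a) = ⨅ a', [φ(a'), A(a',a)]`. -/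
structure SupCat (V : Type*) [CommMonoid V] [CompleteLattice V] [IsQuantale V] where
  carrier : Type*
  hom : carrier → carrier → V
  refl : ∀ x, 1 ≤ hom x x
  trans : ∀ x y z, hom x y * hom y z ≤ hom x z
  separated : ∀ x y, 1 ≤ hom x y → 1 ≤ hom y x → x = y
  sup : {φ : carrier → V // ∀ x y, hom x y * φ y ≤ φ x} → carrier
  hom_sup : ∀ (φ : {φ : carrier → V // ∀ x y, hom x y * φ y ≤ φ x}) (a : carrier),
      hom (sup φ) a = ⨅ a', qhom (φ.1 a') (hom a' a)

/-- The set of contravariant presheaves on a separated cocomplete `V`-category. -/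
abbrev PSh (A : SupCat V) := {φ : A.carrier → V // ∀ x y, A.hom x y * φ y ≤ φ x}

/-- A G-ideal on `A ⊗ B`: a presheaf `ξ` on the tensor product `V`-category `A ⊗ B`
such that `⨅_{a,b} [φ(a) ⊗ ψ(b), ξ(a,b)] = ξ(sup_A φ, sup_B ψ)` for all presheaves
`φ` on `A` and `ψ` on `B`. -/
def IsGIdeal (A B : SupCat V) (ξ : A.carrier → B.carrier → V) : Prop :=
  (∀ a a' b b', A.hom a a' * B.hom b b' * ξ a' b' ≤ ξ a b) ∧
  (∀ (φ : PSh A) (ψ : PSh B),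
      (⨅ a, ⨅ b, qhom (φ.1 a * ψ.1 b) (ξ a b)) = ξ (A.sup φ) (B.sup ψ))

theorem le_qhom_iff {u v w : V} : u ≤ qhom v w ↔ u * v ≤ w := by
  constructor
  · intro h
    refine (mul_le_mul_left h v).trans ?_
    rw [qhom, sSup_mul_distrib]
    exact iSup₂_le fun _ hu => hu
  · exact fun h => le_sSup h

namespace SupCat

variable (A : SupCat V)

theorem le_hom_sup (φ : PSh A) (a : A.carrier) : φ.1 a ≤ A.hom a (A.sup φ) := by
  have h := A.refl (A.sup φ)
  rw [A.hom_sup] at h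
  simpa using le_qhom_iff.1 (h.trans (iInf_le _ a))

/-- The Yoneda embedding `a ↦ A(·, a)`. -/
def yoneda (a : A.carrier) : PSh A := ⟨fun x => A.hom x a, fun x y => A.trans x y a⟩

theorem sup_yoneda (a : A.carrier) : A.sup (A.yoneda a) = a := by
  refine A.separated _ _ ?_ ((A.refl a).trans (A.le_hom_sup (A.yoneda a) a))
  rw [A.hom_sup]
  exact le_iInf fun x => le_qhom_iff.2 (one_mul _).le

/-- The map `t` is an enriched left adjoint of `sup_A`, i.e. `DA(t a, φ) = A(a, sup φ)`. -/
abbrev IsLeftAdjointSup (t : A.carrier → PSh A) : Prop :=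
  ∀ (a : A.carrier) (φ : PSh A), (⨅ x, qhom ((t a).1 x) (φ.1 x)) = A.hom a (A.sup φ)

variable {A} {t : A.carrier → PSh A}

theorem t_mul_hom_sup_le (ht : A.IsLeftAdjointSup t) (a x : A.carrier) (φ : PSh A) :
    (t a).1 x * A.hom a (A.sup φ) ≤ φ.1 x := by
  rw [mul_comm, ← le_qhom_iff, ← ht]
  exact iInf_le _ x

/-- The counit of `t ⊣ sup`. -/
theorem t_sup_le (ht : A.IsLeftAdjointSup t) (φ : PSh A) (x : A.carrier) :
    (t (A.sup φ)).1 x ≤ φ.1 x :=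
  (le_mul_of_one_le_right' (A.refl _)).trans (t_mul_hom_sup_le ht _ x φ)

theorem t_le_hom (ht : A.IsLeftAdjointSup t) (a x : A.carrier) : (t a).1 x ≤ A.hom x a := by
  have h := t_sup_le ht (A.yoneda a) x
  rwa [sup_yoneda] at h

theorem hom_sup_t (ht : A.IsLeftAdjointSup t) (a b : A.carrier) :
    A.hom (A.sup (t a)) b = A.hom a b := by
  rw [A.hom_sup]
  exact (ht a (A.yoneda b)).trans (by rw [sup_yoneda])

theorem sup_t (ht : A.IsLeftAdjointSup t) (a : A.carrier) : A.sup (t a) = a :=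
  A.separated _ _ ((hom_sup_t ht a a).symm ▸ A.refl a)
    (hom_sup_t ht a (A.sup (t a)) ▸ A.refl _)

theorem t_mul_hom_le (ht : A.IsLeftAdjointSup t) (a a' x : A.carrier) :
    (t a).1 x * A.hom a a' ≤ (t a').1 x := by
  have h := t_mul_hom_sup_le ht a x (t a')
  rwa [sup_t ht] at h

/-- The interpolation property of the totally-below presheaves `t a`. -/
theorem interpolation (ht : A.IsLeftAdjointSup t) (a x : A.carrier) :
    (t a).1 x ≤ ⨆ z, (t a).1 z * (t z).1 x := by
  let φ : PSh A := ⟨fun x => ⨆ z, (t a).1 z * (t z).1 x, fun x y => by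
    rw [Quantale.mul_iSup_distrib]
    refine iSup_mono fun z => ?_
    rw [mul_left_comm]
    exact mul_le_mul_right ((t z).2 x y) _⟩
  -- `s = sup φ` satisfies `t a z ≤ A(sup (t z), s) = A(z, s)`, so `s` lies above `sup (t a) = a`.
  have h : 1 ≤ A.hom a (A.sup φ) := by
    rw [← hom_sup_t ht, A.hom_sup]
    refine le_iInf fun z => le_qhom_iff.2 ?_
    rw [one_mul, ← hom_sup_t ht, A.hom_sup]
    refine le_iInf fun y => le_qhom_iff.2 ?_
    exact (le_iSup (fun z => (t a).1 z * (t z).1 y) z).trans (A.le_hom_sup φ y)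
  exact (le_mul_of_one_le_right' h).trans (t_mul_hom_sup_le ht a x φ)

theorem t_sup_interpolation (ht : A.IsLeftAdjointSup t) (φ : PSh A) (x : A.carrier) :
    (t (A.sup φ)).1 x ≤ ⨆ z, φ.1 z * (t z).1 x :=
  (interpolation ht _ x).trans
    (iSup_mono fun z => mul_le_mul_left (t_sup_le ht φ z) _)

theorem t_mul_le_t_sup (ht : A.IsLeftAdjointSup t) (φ : PSh A) (a x : A.carrier) :
    φ.1 a * (t a).1 x ≤ (t (A.sup φ)).1 x := by
  rw [mul_comm]
  exact (mul_le_mul_right (A.le_hom_sup φ a) _).trans (t_mul_hom_le ht a _ x)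

end SupCat

theorem le_iInf₂_qhom_iff {α β : Type*} {u : V} {φ : α → V} {ψ : β → V} {θ : α → β → V} :
    (u ≤ ⨅ x, ⨅ y, qhom (φ x * ψ y) (θ x y)) ↔ ∀ x y, u * (φ x * ψ y) ≤ θ x y := by
  simp only [le_iInf_iff, le_qhom_iff]

/-- For completely distributive `A`, `B` (with enriched left adjoints
`t_A ⊣ sup_A`, `t_B ⊣ sup_B`), the map
`q(θ)(a,b) := ⨅_{x,y} [t_A(a)(x) ⊗ t_B(b)(y), θ(x,y)]` produces, for every presheaf `θ`
on `A ⊗ B`, the least G-ideal above `θ`; so `q` is left adjoint to the inclusion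
`A ⊗_V B ↪ D(A ⊗ B)`. -/
theorem stmt14 (A B : SupCat V)
    (tA : A.carrier → PSh A)
    (htA : ∀ (a : A.carrier) (φ : PSh A),
        (⨅ x, qhom ((tA a).1 x) (φ.1 x)) = A.hom a (A.sup φ))
    (tB : B.carrier → PSh B)
    (htB : ∀ (b : B.carrier) (ψ : PSh B),
        (⨅ y, qhom ((tB b).1 y) (ψ.1 y)) = B.hom b (B.sup ψ))
    (θ : A.carrier → B.carrier → V)
    (hθ : ∀ a a' b b', A.hom a a' * B.hom b b' * θ a' b' ≤ θ a b) :
    -- (i) q(θ) is a G-ideal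
    IsGIdeal A B (fun a b => ⨅ x, ⨅ y, qhom ((tA a).1 x * (tB b).1 y) (θ x y)) ∧
    -- (ii) θ ≤ q(θ)
    (∀ a b, θ a b ≤ ⨅ x, ⨅ y, qhom ((tA a).1 x * (tB b).1 y) (θ x y)) ∧
    -- (iii) for every G-ideal ξ: q(θ) ≤ ξ ↔ θ ≤ ξ
    (∀ ξ : A.carrier → B.carrier → V, IsGIdeal A B ξ →
        ((∀ a b, (⨅ x, ⨅ y, qhom ((tA a).1 x * (tB b).1 y) (θ x y)) ≤ ξ a b)
          ↔ (∀ a b, θ a b ≤ ξ a b))) := by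
  have hq : ∀ a b x y, (⨅ x, ⨅ y, qhom ((tA a).1 x * (tB b).1 y) (θ x y)) *
      ((tA a).1 x * (tB b).1 y) ≤ θ x y := fun a b => le_iInf₂_qhom_iff.1 le_rfl
  have hle : ∀ a b, θ a b ≤ ⨅ x, ⨅ y, qhom ((tA a).1 x * (tB b).1 y) (θ x y) := by
    refine fun a b => le_iInf₂_qhom_iff.2 fun x y => ?_
    rw [mul_comm]
    exact (mul_le_mul_left (mul_le_mul' (SupCat.t_le_hom htA a x)
      (SupCat.t_le_hom htB b y)) _).trans (hθ x a y b)
  refine ⟨⟨fun a a' b b' => ?_, fun φ ψ => le_antisymm ?_ ?_⟩, hle, fun ξ hξ =>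
    ⟨fun h a b => (hle a b).trans (h a b), fun h a b => ?_⟩⟩
  · refine le_iInf₂_qhom_iff.2 fun x y => le_trans ?_ (hq a' b' x y)
    rw [mul_comm (A.hom a a' * B.hom b b'), mul_assoc, mul_comm (A.hom a a' * B.hom b b'),
      mul_mul_mul_comm]
    exact mul_le_mul_right
      (mul_le_mul' (SupCat.t_mul_hom_le htA a a' x) (SupCat.t_mul_hom_le htB b b' y)) _
  · refine le_iInf₂_qhom_iff.2 fun x y => ?_
    refine (mul_le_mul_right (mul_le_mul' (SupCat.t_sup_interpolation htA φ x)
      (SupCat.t_sup_interpolation htB ψ y)) _).trans ?_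
    simp only [Quantale.iSup_mul_distrib, Quantale.mul_iSup_distrib]
    refine iSup_le fun z => iSup_le fun w => ?_
    rw [mul_mul_mul_comm, ← mul_assoc]
    exact (mul_le_mul_left (le_iInf₂_qhom_iff.1 le_rfl _ _) _).trans (hq _ _ x y)
  · refine le_iInf₂_qhom_iff.2 fun a b => le_iInf₂_qhom_iff.2 fun x y => ?_
    refine le_trans ?_ (hq (A.sup φ) (B.sup ψ) x y)
    rw [mul_assoc, mul_mul_mul_comm]
    exact mul_le_mul_right
      (mul_le_mul' (SupCat.t_mul_le_t_sup htA φ a x) (SupCat.t_mul_le_t_sup htB ψ b y)) _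
  · have hξ' := hξ.2 (tA a) (tB b)
    rw [SupCat.sup_t htA, SupCat.sup_t htB] at hξ'
    rw [← hξ']
    exact le_iInf₂_qhom_iff.2 fun x y => (hq a b x y).trans (h x y)
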